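/- A K-superalgebra A over a field K of characteristic 0 is split semisimple if and only if A is isomorphic, as a superalgebra, to a finite direct sum of superalgebras each of the form M_{m|n}(K) (full matrix superalgebra with m even and n odd indices) or Q_t(K) (the queer superalgebra: M_t(K) ⊕ M_t(K) with swap involution), with m+n > 0 and t > 0. Moreover, in this case every irreducible module over the underlying algebra |A| is a direct summand of the restriction of some irreducible A-supermodule. -/

import Mathlib

/-- A superalgebra structure on an `O`-algebra `A`: since `2` is invertible in all our base
rings, a `ℤ/2`-grading is the same datum as an `O`-algebra involution `σ` (even part the fixed
points, odd part the anti-fixed points). -/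
structure SuperAlg (O : Type) [CommRing O] (A : Type) [Ring A] [Algebra O A] where
  σ : A ≃ₐ[O] A
  invol : ∀ a, σ (σ a) = a

namespace SuperAlg

variable {O : Type} [CommRing O] {A : Type} [Ring A] [Algebra O A]

/-- An element is even if it is fixed by the sign automorphism. -/
def IsEven (sA : SuperAlg O A) (a : A) : Prop := sA.σ a = a

/-- An element is odd if it is negated by the sign automorphism. -/
def IsOdd (sA : SuperAlg O A) (a : A) : Prop := sA.σ a = -a

/-- The even part `A₀` of a superalgebra, as a subalgebra. -/
def evenPart (sA : SuperAlg O A) : Subalgebra O A where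
  carrier := {a | sA.σ a = a}
  add_mem' := by intro a b ha hb; simp only [Set.mem_setOf_eq] at *; rw [map_add, ha, hb]
  mul_mem' := by intro a b ha hb; simp only [Set.mem_setOf_eq] at *; rw [map_mul, ha, hb]
  algebraMap_mem' := by intro r; simp

/-- A superunit: an invertible odd element. -/
def IsSuperUnit (sA : SuperAlg O A) (u : A) : Prop := IsUnit u ∧ sA.σ u = -u

end SuperAlg

/-- A supermodule structure on a module `M` over a superalgebra `(A, σ)`: an `O`-linear
involution compatible with the sign automorphism of `A`. -/
structure SuperMod {O : Type} [CommRing O] {A : Type} [Ring A] [Algebra O A]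
    (sA : SuperAlg O A) (M : Type) [AddCommGroup M] [Module O M] [Module A M]
    [IsScalarTower O A M] where
  σ : M ≃ₗ[O] M
  invol : ∀ m, σ (σ m) = m
  compat : ∀ (a : A) (m : M), σ (a • m) = sA.σ a • σ m

namespace SuperMod

variable {O : Type} [CommRing O] {A : Type} [Ring A] [Algebra O A] {sA : SuperAlg O A}
variable {M : Type} [AddCommGroup M] [Module O M] [Module A M] [IsScalarTower O A M]

/-- The even part `M₀` of a supermodule, as a module over the even part `A₀`. -/
def evenSub (sM : SuperMod sA M) : Submodule ↥sA.evenPart M where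
  carrier := {m | sM.σ m = m}
  add_mem' := by intro a b ha hb; simp only [Set.mem_setOf_eq] at *; rw [map_add, ha, hb]
  zero_mem' := by simp
  smul_mem' := by
    intro c m hm
    simp only [Set.mem_setOf_eq] at *
    have : (c : A) • m = c • m := rfl
    rw [← this, sM.compat, c.2, hm]

end SuperMod

/-- A module is indecomposable: nonzero, and not the direct sum of two nonzero submodules. -/
def ModIndecomposable (R : Type) [Ring R] (M : Type) [AddCommGroup M] [Module R M] : Prop :=
  (∃ m : M, m ≠ 0) ∧
  ∀ p q : Submodule R M, IsCompl p q → p = ⊥ ∨ q = ⊥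

section SplitSS

variable {K : Type} [Field K] {A : Type} [Ring A] [Algebra K A]

/-- An irreducible supermodule: nonzero, with no nontrivial `σ`-invariant submodule. -/
def IrreducibleSuperMod (sA : SuperAlg K A) {V : Type} [AddCommGroup V] [Module K V]
    [Module A V] [IsScalarTower K A V] (sV : SuperMod sA V) : Prop :=
  (∃ v : V, v ≠ 0) ∧
  ∀ p : Submodule A V, (∀ v ∈ p, sV.σ v ∈ p) → p = ⊥ ∨ p = ⊤

/-- A superalgebra over `K` is split if the (super)endomorphism algebra of every irreducible
supermodule of type `M` is one-dimensional and that of every irreducible supermodule of type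
`Q` is two-dimensional. -/
def SuperSplit (sA : SuperAlg K A) : Prop :=
  ∀ (V : Type) [AddCommGroup V] [Module K V] [Module A V] [IsScalarTower K A V]
    (sV : SuperMod sA V), IrreducibleSuperMod sA sV →
    (IsSimpleModule A V → ∀ f : Module.End A V, ∃ c : K, ∀ v, f v = c • v) ∧
    (¬ IsSimpleModule A V →
      ∃ g : Module.End A V, (¬ ∃ c : K, ∀ v, g v = c • v) ∧
        ∀ f : Module.End A V, ∃ c d : K, ∀ v, f v = c • v + d • g v)

/-- A superalgebra over `K` is semisimple if every supermodule is a direct sum of irreducible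
supermodules; equivalently, every `σ`-invariant submodule of a supermodule has a
`σ`-invariant complement. -/
def SuperSemisimple (sA : SuperAlg K A) : Prop :=
  ∀ (V : Type) [AddCommGroup V] [Module K V] [Module A V] [IsScalarTower K A V]
    (sV : SuperMod sA V) (p : Submodule A V), (∀ v ∈ p, sV.σ v ∈ p) →
    ∃ q : Submodule A V, (∀ v ∈ q, sV.σ v ∈ q) ∧ IsCompl p q

end SplitSS

/-- The direct sum of matrix superalgebras `M_{m i|n i}(K)` and queer superalgebras
`Q_{t j}(K)` (the latter realized as `M_{t j}(K) ⊕ M_{t j}(K)` with the swap involution). -/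
def MsqAlg (K : Type) [Field K] (k₁ k₂ : ℕ) (m n : Fin k₁ → ℕ) (t : Fin k₂ → ℕ) : Type :=
  (∀ i : Fin k₁, Matrix (Fin (m i + n i)) (Fin (m i + n i)) K) ×
  (∀ j : Fin k₂, Matrix (Fin (t j)) (Fin (t j)) K × Matrix (Fin (t j)) (Fin (t j)) K)

instance (K : Type) [Field K] (k₁ k₂ : ℕ) (m n : Fin k₁ → ℕ) (t : Fin k₂ → ℕ) :
    Ring (MsqAlg K k₁ k₂ m n t) :=
  inferInstanceAs (Ring (_ × _))

instance (K : Type) [Field K] (k₁ k₂ : ℕ) (m n : Fin k₁ → ℕ) (t : Fin k₂ → ℕ) :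
    Algebra K (MsqAlg K k₁ k₂ m n t) :=
  inferInstanceAs (Algebra K (_ × _))

/-- The block sign `±1` of an index of `Fin (m + n)`: `+1` on the first `m` (even) indices and
`-1` on the last `n` (odd) indices. -/
def matEps (K : Type) [Field K] (m : ℕ) {N : ℕ} (a : Fin N) : K :=
  if (a : ℕ) < m then 1 else -1

/-- The sign involution of the superalgebra `⨁ M_{m i|n i}(K) ⊕ ⨁ Q_{t j}(K)`: conjugation by
`diag(1_m, -1_n)` on matrix factors, and the swap on queer factors. -/
def msqInvol (K : Type) [Field K] (k₁ k₂ : ℕ) (m n : Fin k₁ → ℕ) (t : Fin k₂ → ℕ) :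
    MsqAlg K k₁ k₂ m n t → MsqAlg K k₁ k₂ m n t :=
  fun x =>
    (fun i => Matrix.of fun a b => (matEps K (m i) a * matEps K (m i) b) • x.1 i a b,
     fun j => ((x.2 j).2, (x.2 j).1))

/-!
A supermodule is a module with a compatible involution, so a submodule `p` of an irreducible
supermodule is `0`, everything, or a complement of its parity twist `σ p`. Averaging a projection
over the involution shows that semisimplicity as a superalgebra is semisimplicity as a ring.

Suppose `A` is split semisimple. An irreducible supermodule that is simple as a module affords a
surjection onto a matrix algebra; an eigenbasis of the involution turns it into a surjection onto
`M_{m|n}(K)`. Otherwise the supermodule is `W ⊕ σ W` with `W` simple, splitness forces `W` and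
`σ W` to be non-isomorphic with scalar endomorphisms, and `a ↦ (a|_W, (σ a)|_W)` is a surjection
onto `Q_t(K)`. Two irreducible supermodules with different annihilators have no nonzero
homomorphism between them, so finitely many of these surjections combine to an isomorphism.

Conversely, in a sum of algebras `M_{m|n}(K)` and `Q_t(K)` the diagonal matrix units are idempotents
`p` with sum `1` and `p A p = K p`, which are even in the first case and satisfy `p A (σ p) = 0` in
the second. Some `p` acts nontrivially on a given irreducible supermodule; a vector fixed by `p`
generates all of it in the first case and one of two summands `W`, `σ W` in the second, and
endomorphisms act on such a vector by scalars because `p A p = K p`.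
-/

namespace SuperMod

section Stable

variable {O : Type} [CommRing O] {A : Type} [Ring A] [Algebra O A] {sA : SuperAlg O A}
variable {V : Type} [AddCommGroup V] [Module O V] [Module A V] [IsScalarTower O A V]

/-- Sub-supermodules, i.e. graded submodules: those preserved by the sign involution. -/
def Stable (sV : SuperMod sA V) (p : Submodule A V) : Prop := ∀ v ∈ p, sV.σ v ∈ p

/-- The parity twist of a submodule: its image, equivalently preimage, under the sign
involution. -/
def twist (sV : SuperMod sA V) (p : Submodule A V) : Submodule A V where
  __ := p.toAddSubmonoid.comap sV.σ
  smul_mem' a v hv := by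
    change sV.σ (a • v) ∈ p
    rw [sV.compat]
    exact p.smul_mem _ hv

variable (sV : SuperMod sA V) {p q : Submodule A V}

@[simp]
theorem mem_twist {v : V} : v ∈ sV.twist p ↔ sV.σ v ∈ p := Iff.rfl

theorem σ_mem_twist {v : V} (hv : v ∈ p) : sV.σ v ∈ sV.twist p := by
  rwa [mem_twist, sV.invol]

theorem twist_twist (p : Submodule A V) : sV.twist (sV.twist p) = p := by
  ext v
  simp only [mem_twist, sV.invol]

theorem smul_σ (a : A) (v : V) : a • sV.σ v = sV.σ (sA.σ a • v) := by
  rw [sV.compat, sA.invol]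

theorem twist_mono (h : p ≤ q) : sV.twist p ≤ sV.twist q := fun _ hv => h hv

/-- The parity twist as an automorphism of the lattice of submodules. -/
def twistOrderIso : Submodule A V ≃o Submodule A V where
  toEquiv := Function.Involutive.toPerm sV.twist sV.twist_twist
  map_rel_iff' {p q} :=
    ⟨fun h => sV.twist_twist p ▸ sV.twist_twist q ▸ sV.twist_mono h, sV.twist_mono⟩

theorem isSimpleModule_twist (hp : IsSimpleModule A p) : IsSimpleModule A (sV.twist p) :=
  isSimpleModule_iff_isAtom.2 <|
    (sV.twistOrderIso.isAtom_iff p).2 (isSimpleModule_iff_isAtom.1 hp)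

theorem isCoatom_twist (hp : IsCoatom p) : IsCoatom (sV.twist p) :=
  (sV.twistOrderIso.isCoatom_iff p).2 hp

theorem stable_sup_twist (p : Submodule A V) : sV.Stable (p ⊔ sV.twist p) := by
  intro v hv
  obtain ⟨x, hx, y, hy, rfl⟩ := Submodule.mem_sup.1 hv
  rw [map_add, add_comm]
  exact Submodule.add_mem_sup hy (sV.σ_mem_twist hx)

theorem stable_inf_twist (p : Submodule A V) : sV.Stable (p ⊓ sV.twist p) :=
  fun _ hv => ⟨hv.2, sV.σ_mem_twist hv.1⟩

/-- The supermodule structure of a sub-supermodule. -/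
def restrict (hp : sV.Stable p) : SuperMod sA p where
  σ := LinearEquiv.ofInvolutive
    { toFun := fun v => ⟨sV.σ v, hp v v.2⟩
      map_add' := fun _ _ => Subtype.ext (map_add sV.σ _ _)
      map_smul' := fun c _ => Subtype.ext (map_smul sV.σ c _) }
    fun v => Subtype.ext (sV.invol v)
  invol v := Subtype.ext (sV.invol v)
  compat a v := Subtype.ext (sV.compat a v)

/-- The conjugate `σ ∘ f ∘ σ` of an endomorphism `f` by the sign involution. -/
def conj (f : Module.End A V) : Module.End A V where
  toFun v := sV.σ (f (sV.σ v))
  map_add' v w := by simp only [map_add]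
  map_smul' a v := by simp only [sV.compat, map_smul, sA.invol, RingHom.id_apply]

@[simp]
theorem conj_apply (f : Module.End A V) (v : V) : sV.conj f v = sV.σ (f (sV.σ v)) := rfl

theorem σ_mem_annihilator (sV : SuperMod sA V) {a : A} (ha : a ∈ Module.annihilator A V) :
    sA.σ a ∈ Module.annihilator A V := by
  rw [Module.mem_annihilator] at ha ⊢
  intro v
  rw [← sV.invol v, ← sV.compat, ha, map_zero]

end Stable

end SuperMod

/-- A superalgebra as a supermodule over itself. -/
def SuperAlg.regular {O : Type} [CommRing O] {A : Type} [Ring A] [Algebra O A]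
    (sA : SuperAlg O A) : SuperMod sA A where
  σ := sA.σ.toLinearEquiv
  invol := sA.invol
  compat := map_mul sA.σ

section Semisimple

variable {K : Type} [Field K] {A : Type} [Ring A] [Algebra K A] {sA : SuperAlg K A}

theorem exists_isAtom_le_of_disjoint_inf_isCoatom {L : Type*} [Lattice L] [BoundedOrder L]
    [IsModularLattice L] {x y z : L} (hx : IsCoatom x) (hy : IsCoatom y)
    (hxy : Disjoint (x ⊓ y) z) (hz : z ≠ ⊥) : ∃ a ≤ z, IsAtom a := by
  have isAtom_of_disjoint {u v : L} (hu : IsCoatom u) (huv : Disjoint u v) (hv : v ≠ ⊥) :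
      IsAtom v :=
    (IsCompl.isCoatom_iff_isAtom
      ⟨huv, hu.not_le_iff_codisjoint.1 fun h => hv (huv.eq_bot_of_ge h)⟩).1 hu
  by_cases hxz : x ⊓ z = ⊥
  · exact ⟨z, le_rfl, isAtom_of_disjoint hx (disjoint_iff.2 hxz) hz⟩
  · refine ⟨x ⊓ z, inf_le_right, isAtom_of_disjoint hy (disjoint_iff.2 ?_) hxz⟩
    rw [← inf_assoc, inf_comm y, hxy.eq_bot]

/- If the socle of `A` were proper, it would lie in some `M ⊓ σ M` with `M` a maximal left ideal.
A complement of that graded left ideal has length at most two, so it meets the socle. -/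
theorem SuperSemisimple.isSemisimpleRing (h : SuperSemisimple sA) : IsSemisimpleRing A := by
  refine sSup_simples_eq_top_iff_isSemisimpleModule.1 (by_contra fun hS => ?_)
  obtain ⟨M, hM, hSM⟩ := Ideal.exists_le_maximal _ hS
  have simple_le {m : Submodule A A} (hm : IsSimpleModule A m) : m ≤ M :=
    (le_sSup (s := {m : Submodule A A | IsSimpleModule A m}) hm).trans hSM
  have simple_le_twist {m : Submodule A A} (hm : IsSimpleModule A m) :
      m ≤ sA.regular.twist M := by
    rw [← sA.regular.twist_twist m]
    exact sA.regular.twist_mono (simple_le (sA.regular.isSimpleModule_twist hm))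
  obtain ⟨q, -, hq⟩ := h A sA.regular _ (sA.regular.stable_inf_twist M)
  have hq_bot : q ≠ ⊥ := by
    rintro rfl
    exact hM.ne_top (top_le_iff.1 (hq.sup_eq_top ▸ sup_le inf_le_left bot_le))
  obtain ⟨m, hmq, hm⟩ := exists_isAtom_le_of_disjoint_inf_isCoatom hM.out
    (sA.regular.isCoatom_twist hM.out) hq.disjoint hq_bot
  have hm_simple : IsSimpleModule A m := isSimpleModule_iff_isAtom.2 hm
  exact hm.1 <| le_bot_iff.1 <|
    hq.disjoint (le_inf (simple_le hm_simple) (simple_le_twist hm_simple)) hmq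

theorem SuperMod.exists_stable_isCompl [NeZero (2 : K)]
    {V : Type} [AddCommGroup V] [Module K V] [Module A V] [IsScalarTower K A V]
    [IsSemisimpleModule A V] (sV : SuperMod sA V) {p : Submodule A V} (hp : sV.Stable p) :
    ∃ q : Submodule A V, sV.Stable q ∧ IsCompl p q := by
  obtain ⟨q, hq⟩ := exists_isCompl p
  let π : Module.End A V := p.projection q hq
  have hπ (v : V) : π v ∈ p := Submodule.projection_apply_mem hq v
  let average : Module.End A V := (2⁻¹ : K) • (π + sV.conj π)
  have average_apply (v : V) : average v = (2⁻¹ : K) • (π v + sV.σ (π (sV.σ v))) := rfl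
  have average_isProj : LinearMap.IsProj p average := by
    refine ⟨fun v => ?_, fun v hv => ?_⟩
    · exact p.smul_of_tower_mem _ (p.add_mem (hπ v) (hp _ (hπ _)))
    · rw [average_apply, Submodule.projection_apply_of_mem_left hq hv,
        Submodule.projection_apply_of_mem_left hq (hp v hv), sV.invol, ← two_smul K, smul_smul,
        inv_mul_cancel₀ two_ne_zero, one_smul]
  have average_σ (v : V) : average (sV.σ v) = sV.σ (average v) := by
    simp only [average_apply, sV.invol, map_smul, map_add, add_comm]
  refine ⟨LinearMap.ker average, fun v hv => ?_, average_isProj.isCompl⟩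
  rw [LinearMap.mem_ker] at hv ⊢
  rw [average_σ, hv, map_zero]

theorem superSemisimple_iff_isSemisimpleRing [NeZero (2 : K)] :
    SuperSemisimple sA ↔ IsSemisimpleRing A :=
  ⟨SuperSemisimple.isSemisimpleRing, fun _ _ _ _ _ _ sV _ hp => sV.exists_stable_isCompl hp⟩

end Semisimple

namespace IrreducibleSuperMod

variable {K : Type} [Field K] {A : Type} [Ring A] [Algebra K A] {sA : SuperAlg K A}
variable {V : Type} [AddCommGroup V] [Module K V] [Module A V] [IsScalarTower K A V]
variable {V' : Type} [AddCommGroup V'] [Module K V'] [Module A V'] [IsScalarTower K A V']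

theorem of_isSimpleModule [IsSimpleModule A V] (sV : SuperMod sA V) :
    IrreducibleSuperMod sA sV :=
  have := IsSimpleModule.nontrivial A V
  ⟨exists_ne 0, fun p _ => eq_bot_or_eq_top p⟩

variable {sV : SuperMod sA V} {sV' : SuperMod sA V'} {p : Submodule A V}

theorem nontrivial (hV : IrreducibleSuperMod sA sV) : Nontrivial V :=
  let ⟨v, hv⟩ := hV.1
  nontrivial_of_ne v 0 hv

theorem eq_top (hV : IrreducibleSuperMod sA sV) (hp : sV.Stable p) (hp_bot : p ≠ ⊥) : p = ⊤ :=
  (hV.2 p hp).resolve_left hp_bot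

theorem eq_bot (hV : IrreducibleSuperMod sA sV) (hp : sV.Stable p) (hp_top : p ≠ ⊤) : p = ⊥ :=
  (hV.2 p hp).resolve_right hp_top

theorem sup_twist_eq_top (hV : IrreducibleSuperMod sA sV) (hp : p ≠ ⊥) :
    p ⊔ sV.twist p = ⊤ :=
  hV.eq_top (sV.stable_sup_twist p) fun h => hp (sup_eq_bot_iff.1 h).1

theorem inf_twist_eq_bot (hV : IrreducibleSuperMod sA sV) (hp : p ≠ ⊤) :
    p ⊓ sV.twist p = ⊥ :=
  hV.eq_bot (sV.stable_inf_twist p) fun h => hp (inf_eq_top_iff.1 h).1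

theorem isCompl_twist (hV : IrreducibleSuperMod sA sV) (hp_bot : p ≠ ⊥) (hp_top : p ≠ ⊤) :
    IsCompl p (sV.twist p) :=
  .of_eq (hV.inf_twist_eq_bot hp_top) (hV.sup_twist_eq_top hp_bot)

theorem isSimpleModule_of_ne (hV : IrreducibleSuperMod sA sV) (hp_bot : p ≠ ⊥)
    (hp_top : p ≠ ⊤) : IsSimpleModule A p := by
  refine isSimpleModule_iff_isAtom.2 ⟨hp_bot, fun q hq => by_contra fun hq_bot => hq.ne ?_⟩
  refine eq_of_le_of_inf_le_of_sup_le hq.le (z := sV.twist p) ?_ ?_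
  · rw [hV.inf_twist_eq_bot hp_top]
    exact bot_le
  · rw [hV.sup_twist_eq_top hp_bot, ← hV.sup_twist_eq_top hq_bot]
    exact sup_le_sup_left (sV.twist_mono hq.le) q

theorem exists_isSimpleModule_isCompl_twist (hV : IrreducibleSuperMod sA sV)
    (hV_simple : ¬ IsSimpleModule A V) :
    ∃ W : Submodule A V, IsSimpleModule A W ∧ IsCompl W (sV.twist W) := by
  have := hV.nontrivial
  obtain ⟨W, hW_bot, hW_top⟩ : ∃ W : Submodule A V, W ≠ ⊥ ∧ W ≠ ⊤ := by
    contrapose! hV_simple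
    exact (isSimpleModule_iff A V).2 ⟨fun p => or_iff_not_imp_left.2 (hV_simple p)⟩
  exact ⟨W, hV.isSimpleModule_of_ne hW_bot hW_top, hV.isCompl_twist hW_bot hW_top⟩

theorem mem_annihilator_of_forall_mem (hV : IrreducibleSuperMod sA sV) (hp : p ≠ ⊥) {a : A}
    (ha : ∀ v ∈ p, a • v = 0) (hσa : ∀ v ∈ p, sA.σ a • v = 0) :
    a ∈ Module.annihilator A V := by
  refine Module.mem_annihilator.2 fun v => ?_
  obtain ⟨x, hx, y, hy, rfl⟩ :=
    Submodule.mem_sup.1 (hV.sup_twist_eq_top hp ▸ Submodule.mem_top (x := v))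
  have hay : a • y = 0 := by rw [← sV.invol y, sV.smul_σ, hσa _ hy, map_zero]
  rw [smul_add, ha x hx, hay, add_zero]

/- The range of a nonzero `f` generates `V'` as a supermodule, and its kernel contains no nonzero
sub-supermodule of `V`; annihilators are invariant under `σ`. -/
theorem annihilator_eq_of_ne_zero (hV : IrreducibleSuperMod sA sV)
    (hV' : IrreducibleSuperMod sA sV') {f : V →ₗ[A] V'} (hf : f ≠ 0) :
    Module.annihilator A V = Module.annihilator A V' := by
  have annihilates_range {a : A} (ha : a ∈ Module.annihilator A V) :
      ∀ w ∈ LinearMap.range f, a • w = 0 := by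
    rintro _ ⟨v, rfl⟩
    rw [← map_smul, Module.mem_annihilator.1 ha, map_zero]
  have smul_mem_ker {a : A} (ha : a ∈ Module.annihilator A V') (v : V) :
      a • v ∈ LinearMap.ker f := by
    rw [LinearMap.mem_ker, map_smul, Module.mem_annihilator.1 ha]
  apply le_antisymm
  · exact fun a ha => hV'.mem_annihilator_of_forall_mem (LinearMap.range_eq_bot.not.2 hf)
      (annihilates_range ha) (annihilates_range (sV.σ_mem_annihilator ha))
  · refine fun a ha => Module.mem_annihilator.2 fun v => (Submodule.mem_bot A).1 ?_
    rw [← hV.inf_twist_eq_bot (LinearMap.ker_eq_top.not.2 hf)]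
    refine ⟨smul_mem_ker ha v, ?_⟩
    rw [SetLike.mem_coe, SuperMod.mem_twist, sV.compat]
    exact smul_mem_ker (sV'.σ_mem_annihilator ha) _

end IrreducibleSuperMod

section Double

variable {K : Type} [Field K] {A : Type} [Ring A] [Algebra K A] (sA : SuperAlg K A)
variable (W : Type) [AddCommGroup W] [Module K W] [Module A W] [IsScalarTower K A W]

/-- The pullback of an `A`-module along the sign automorphism: a copy of `W` on which `a` acts as
`sA.σ a`. -/
def SuperAlg.Twist (_ : SuperAlg K A) (W : Type) : Type := W

namespace SuperAlg.Twist

instance : AddCommGroup (sA.Twist W) := inferInstanceAs (AddCommGroup W)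

instance : Module K (sA.Twist W) := inferInstanceAs (Module K W)

instance : Module A (sA.Twist W) := Module.compHom W (sA.σ : A →+* A)

instance : IsScalarTower K A (sA.Twist W) where
  smul_assoc c a (w : W) := by
    change sA.σ (c • a) • w = c • sA.σ a • w
    rw [map_smul, smul_assoc]

end SuperAlg.Twist

/-- The supermodule induced from `W`: two copies of `W` swapped by the sign involution. -/
def SuperMod.double : SuperMod sA (W × sA.Twist W) where
  σ := LinearEquiv.prodComm K W W
  invol _ := rfl
  compat a w := Prod.ext rfl (congrArg (· • w.1) (sA.invol a).symm)

variable {sA W}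

theorem SuperMod.double_fst_bijective [IsSimpleModule A W] {p : Submodule A (W × sA.Twist W)}
    (hp : (double sA W).Stable p) (hp_bot : p ≠ ⊥) (hp_top : p ≠ ⊤) :
    Function.Bijective (LinearMap.fst A W (sA.Twist W) ∘ₗ p.subtype) := by
  constructor
  · refine (injective_iff_map_eq_zero _).2 ?_
    rintro ⟨⟨x, (y : W)⟩, hxy⟩ (rfl : x = 0)
    by_contra! hy
    have hy : y ≠ 0 := fun h => hy (Subtype.ext (Prod.ext rfl h))
    have hyx : (y, (0 : sA.Twist W)) ∈ p := hp _ hxy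
    have left_mem (u : W) : (u, (0 : sA.Twist W)) ∈ p := by
      obtain ⟨a, rfl⟩ := IsSimpleModule.toSpanSingleton_surjective A hy u
      simpa using p.smul_mem a hyx
    have right_mem (w : sA.Twist W) : ((0 : W), w) ∈ p := hp _ (left_mem w)
    exact hp_top (eq_top_iff.2 fun ⟨u, w⟩ _ => by simpa using p.add_mem (left_mem u) (right_mem w))
  · refine LinearMap.surjective_of_ne_zero fun hzero => hp_bot (eq_bot_iff.2 ?_)
    have fst_eq_zero {v : W × sA.Twist W} (hv : v ∈ p) : v.1 = 0 :=
      LinearMap.congr_fun hzero ⟨v, hv⟩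
    exact fun v hv => Prod.ext (fst_eq_zero hv) (fst_eq_zero (hp v hv))

/- If `W ⊕ σW` is reducible, then it has a proper nonzero sub-supermodule, which projects
isomorphically onto `W`. -/
theorem SuperMod.exists_irreducible_retract (sA : SuperAlg K A) [IsSimpleModule A W] :
    ∃ (V : Type) (_ : AddCommGroup V) (_ : Module K V) (_ : Module A V)
      (_ : IsScalarTower K A V) (sV : SuperMod sA V), IrreducibleSuperMod sA sV ∧
      ∃ (ι : W →ₗ[A] V) (r : V →ₗ[A] W), ∀ w, r (ι w) = w := by
  have := IsSimpleModule.nontrivial A W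
  by_cases hV : IrreducibleSuperMod sA (double sA W)
  · exact ⟨_, _, _, _, _, double sA W, hV, LinearMap.inl A W (sA.Twist W),
      LinearMap.fst A W (sA.Twist W), fun _ => rfl⟩
  obtain ⟨p, hp, hp_bot, hp_top⟩ : ∃ p, (double sA W).Stable p ∧ p ≠ ⊥ ∧ p ≠ ⊤ := by
    by_contra! h
    exact hV ⟨exists_ne 0, fun p hp => or_iff_not_imp_left.2 (h p hp)⟩
  let e : p ≃ₗ[A] W := .ofBijective _ (double_fst_bijective hp hp_bot hp_top)
  have := IsSimpleModule.congr e
  exact ⟨p, _, _, _, _, (double sA W).restrict hp, .of_isSimpleModule _, e.symm, e,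
    e.apply_symm_apply⟩

end Double

section Density

variable {A : Type*} [Ring A] [IsSemisimpleRing A]

/- Finitely many elements of `M` have the same annihilator as all of `M`, so that any `m : M` is
the image of the tuple they form under some homomorphism. -/
theorem finite_moduleEnd_of_isSemisimpleRing (M : Type*) [AddCommGroup M] [Module A M] :
    Module.Finite (Module.End A M) M := by
  classical
  obtain ⟨s, hs⟩ := Finset.exists_inf_le fun m : M => LinearMap.ker (.toSpanSingleton A M m)
  let T : A →ₗ[A] (s → M) := .pi fun x => .toSpanSingleton A M x
  have ker_T_le (m : M) : LinearMap.ker T ≤ LinearMap.ker (.toSpanSingleton A M m) := by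
    refine le_trans (fun a ha => ?_) (hs m)
    exact Submodule.mem_finsetInf.2 fun x hx => congrFun (LinearMap.mem_ker.1 ha) ⟨x, hx⟩
  refine ⟨s, eq_top_iff.2 fun m _ => ?_⟩
  obtain ⟨g, hg⟩ := IsSemisimpleModule.extension_property
    ((LinearMap.ker T).liftQ T le_rfl)
    (LinearMap.ker_eq_bot.1 (Submodule.ker_liftQ_eq_bot' _ _ rfl))
    ((LinearMap.ker T).liftQ _ (ker_T_le m))
  have hm : g (fun x => x) = m := by
    have hT : T 1 = fun x : s => (x : M) := funext fun x => one_smul A (x : M)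
    simpa [hT] using LinearMap.congr_fun hg (Submodule.Quotient.mk 1)
  rw [← hm, ← Finset.univ_sum_single fun x : s => (x : M), map_sum]
  exact Submodule.sum_mem _ fun x _ =>
    Submodule.smul_mem _ (g ∘ₗ .single A (fun _ => M) x) (Submodule.subset_span x.2)

theorem exists_forall_smul_eq_of_pairwise_hom_eq_zero {ι : Type*} [Finite ι] {M : ι → Type*}
    [∀ i, AddCommGroup (M i)] [∀ i, Module A (M i)]
    (hM : Pairwise fun i j => ∀ f : M i →ₗ[A] M j, f = 0) (c : ι → A) :
    ∃ a : A, ∀ i (v : M i), a • v = c i • v := by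
  classical
  have := Fintype.ofFinite ι
  have := finite_moduleEnd_of_isSemisimpleRing (A := A) (∀ i, M i)
  have diagonal (g : Module.End A (∀ i, M i)) (m : ∀ i, M i) (i : ι) :
      g m i = g (Pi.single i (m i)) i := by
    conv_lhs => rw [← Finset.univ_sum_single m]
    rw [map_sum, Finset.sum_apply]
    refine Finset.sum_eq_single_of_mem i (Finset.mem_univ i) fun j _ hj => ?_
    exact LinearMap.congr_fun (hM hj (.proj i ∘ₗ g ∘ₗ .single A M j)) (m j)
  let F : Module.End (Module.End A (∀ i, M i)) (∀ i, M i) :=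
    { toFun := fun m i => c i • m i
      map_add' := fun _ _ => funext fun _ => smul_add _ _ _
      map_smul' := fun g m => funext fun i => by
        change c i • g m i = g (fun j => c j • m j) i
        rw [diagonal g m, diagonal g fun j => c j • m j, Pi.single_smul i (c i), map_smul,
          Pi.smul_apply] }
  obtain ⟨a, ha⟩ := Module.Finite.toModuleEnd_moduleEnd_surjective F
  refine ⟨a, fun i v => ?_⟩
  simpa [F] using congrFun (LinearMap.congr_fun ha (Pi.single i v)) i

end Density

section ScalarEnd

variable (K A M : Type*) [Field K] [Ring A] [AddCommGroup M] [Module K M] [Module A M]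

/-- The conclusion of Schur's lemma over a splitting field: the only `A`-endomorphisms of `M` are
the scalars of `K`. -/
def HasScalarEnd : Prop := ∀ f : Module.End A M, ∃ c : K, ∀ v, f v = c • v

variable {K A M} [IsSemisimpleRing A]

theorem HasScalarEnd.finite (hM : HasScalarEnd K A M) : Module.Finite K M := by
  obtain ⟨s, hs⟩ := (finite_moduleEnd_of_isSemisimpleRing (A := A) M).fg_top
  refine ⟨s, eq_top_iff.2 fun v _ => ?_⟩
  induction hs ▸ Submodule.mem_top (x := v) using Submodule.span_induction with
  | mem v hv => exact Submodule.subset_span hv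
  | zero => exact Submodule.zero_mem _
  | add v w _ _ hv hw => exact Submodule.add_mem _ (hv trivial) (hw trivial)
  | smul f v _ hv =>
    obtain ⟨c, hc⟩ := hM f
    rw [Module.End.smul_def, hc]
    exact Submodule.smul_mem _ c (hv trivial)

theorem HasScalarEnd.lsmul_surjective [Algebra K A] [IsScalarTower K A M]
    (hM : HasScalarEnd K A M) :
    Function.Surjective (Algebra.lsmul K K M : A →ₐ[K] Module.End K M) := by
  intro F
  have := finite_moduleEnd_of_isSemisimpleRing (A := A) M
  let F' : Module.End (Module.End A M) M :=
    { __ := F.toAddMonoidHom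
      map_smul' := fun f v => by
        obtain ⟨c, hc⟩ := hM f
        change F (f v) = f (F v)
        rw [hc, hc, map_smul] }
  obtain ⟨a, ha⟩ := Module.Finite.toModuleEnd_moduleEnd_surjective F'
  exact ⟨a, LinearMap.ext fun v => LinearMap.congr_fun ha v⟩

end ScalarEnd

section MatrixRep

variable {K A M ι : Type*} [Field K] [Ring A] [Algebra K A] [AddCommGroup M] [Module K M]
  [Module A M] [IsScalarTower K A M] [Fintype ι] [DecidableEq ι]

/-- The matrix representation of `A` afforded by a module with a chosen `K`-basis. -/
noncomputable def matrixRep (b : Module.Basis ι K M) : A →ₐ[K] Matrix ι ι K :=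
  (LinearMap.toMatrixAlgEquiv b : Module.End K M →ₐ[K] Matrix ι ι K).comp (Algebra.lsmul K K M)

variable (b : Module.Basis ι K M)

theorem matrixRep_apply (a : A) (i j : ι) : matrixRep b a i j = b.repr (a • b j) i :=
  LinearMap.toMatrixAlgEquiv_apply b (Algebra.lsmul K K M a) i j

theorem matrixRep_eq_iff {a a' : A} :
    matrixRep b a = matrixRep b a' ↔ ∀ v : M, a • v = a' • v :=
  (LinearMap.toMatrixAlgEquiv b).injective.eq_iff.trans LinearMap.ext_iff

theorem matrixRep_eq_zero_iff {a : A} : matrixRep b a = 0 ↔ ∀ v : M, a • v = 0 := by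
  simpa using matrixRep_eq_iff b (a := a) (a' := 0)

theorem HasScalarEnd.matrixRep_surjective [IsSemisimpleRing A] (hM : HasScalarEnd K A M) :
    Function.Surjective (matrixRep b : A →ₐ[K] Matrix ι ι K) :=
  (LinearMap.toMatrixAlgEquiv b).surjective.comp hM.lsmul_surjective

end MatrixRep

section SignInvolution

variable {K : Type} [Field K]

theorem matEps_mul_self (m : ℕ) {N : ℕ} (i : Fin N) : matEps K m i * matEps K m i = 1 := by
  unfold matEps
  split_ifs <;> simp

/-- The sign involution of `M_{m|n}(K)`: conjugation by `diag(1_m, -1_n)`. -/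
def matrixInvol (K : Type) [Field K] (m : ℕ) {N : ℕ} (x : Matrix (Fin N) (Fin N) K) :
    Matrix (Fin N) (Fin N) K :=
  .of fun i j => (matEps K m i * matEps K m j) • x i j

theorem matrixInvol_apply (m : ℕ) {N : ℕ} (x : Matrix (Fin N) (Fin N) K) (i j : Fin N) :
    matrixInvol K m x i j = matEps K m i * matEps K m j * x i j := rfl

theorem msqInvol_eq_prodMap (k₁ k₂ : ℕ) (m n : Fin k₁ → ℕ) (t : Fin k₂ → ℕ) :
    msqInvol K k₁ k₂ m n t =
      Prod.map (Pi.map fun i => matrixInvol K (m i)) (Pi.map fun _ => Prod.swap) := rfl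

theorem exists_basis_map_eq_matEps_smul [NeZero (2 : K)] {V : Type*} [AddCommGroup V]
    [Module K V] [FiniteDimensional K V] {σ : V →ₗ[K] V} (hσ : Function.Involutive σ) :
    ∃ (m n : ℕ) (b : Module.Basis (Fin (m + n)) K V), ∀ i, σ (b i) = matEps K m i • b i := by
  let even : Submodule K V := LinearMap.ker (σ - LinearMap.id)
  let evenProj : V →ₗ[K] V := (2⁻¹ : K) • (LinearMap.id + σ)
  have mem_even {v : V} : v ∈ even ↔ σ v = v := by simp [even, sub_eq_zero]
  have isProj : LinearMap.IsProj even evenProj := by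
    refine ⟨fun v => mem_even.2 ?_, fun v hv => ?_⟩
    · simp [evenProj, hσ v, add_comm]
    · simp [evenProj, mem_even.1 hv, ← two_smul K, smul_smul, two_ne_zero]
  have mem_odd {v : V} (hv : v ∈ LinearMap.ker evenProj) : σ v = -v := by
    have h : (2⁻¹ : K) • (v + σ v) = 0 := hv
    exact eq_neg_of_add_eq_zero_right
      ((smul_eq_zero.1 h).resolve_left (inv_ne_zero two_ne_zero))
  let b := ((Module.finBasis K even).prod (Module.finBasis K (LinearMap.ker evenProj))).map
    (Submodule.prodEquivOfIsCompl _ _ isProj.isCompl)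
  refine ⟨_, _, b.reindex finSumFinEquiv, fun i => ?_⟩
  obtain ⟨i, rfl⟩ := finSumFinEquiv.surjective i
  rw [Module.Basis.reindex_apply, Equiv.symm_apply_apply]
  obtain i | i := i
  · have hb : b (Sum.inl i) = Module.finBasis K even i := by simp [b]
    rw [hb, mem_even.1 (Module.finBasis K even i).2]
    simp [matEps]
  · have hb : b (Sum.inr i) = Module.finBasis K (LinearMap.ker evenProj) i := by simp [b]
    rw [hb, mem_odd (Module.finBasis K _ i).2]
    simp [matEps]

end SignInvolution

section Summand

variable {K A V : Type*} [Field K] [Ring A] [AddCommGroup V] [Module K V] [Module A V]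
  {p q : Submodule A V}

variable (K) in
theorem projection_ne_smul (h : IsCompl p q) (hp : p ≠ ⊥) (hq : q ≠ ⊥) :
    ¬ ∃ c : K, ∀ v, p.projection q h v = c • v := by
  rintro ⟨c, hc⟩
  obtain ⟨v, hv, hv_ne⟩ := p.exists_mem_ne_zero_of_ne_bot hp
  obtain ⟨w, hw, hw_ne⟩ := q.exists_mem_ne_zero_of_ne_bot hq
  have hcw : c • w = 0 := (hc w).symm.trans (Submodule.projection_apply_of_mem_right h hw)
  have hcv : c • v = v := (hc v).symm.trans (Submodule.projection_apply_of_mem_left h hv)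
  rw [(smul_eq_zero.1 hcw).resolve_right hw_ne, zero_smul] at hcv
  exact hv_ne hcv.symm

theorem exists_eq_smul_add_smul_of_ne_smul {g e : Module.End A V}
    (hg : ∀ f : Module.End A V, ∃ c d : K, ∀ v, f v = c • v + d • g v)
    (he : ¬ ∃ c : K, ∀ v, e v = c • v) (f : Module.End A V) :
    ∃ c d : K, ∀ v, f v = c • v + d • e v := by
  obtain ⟨c, d, hf⟩ := hg f
  obtain ⟨c', d', he'⟩ := hg e
  have hd' : d' ≠ 0 := by
    rintro rfl
    exact he ⟨c', fun v => by rw [he', zero_smul, add_zero]⟩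
  refine ⟨c - d * d'⁻¹ * c', d * d'⁻¹, fun v => ?_⟩
  rw [hf, he']
  match_scalars <;> field_simp
  ring

theorem eq_smul_add_smul_projection (h : IsCompl p q)
    {f : Module.End A V} {c d : K} (hc : ∀ v ∈ p, f v = c • v) (hd : ∀ v ∈ q, f v = d • v)
    (v : V) : f v = d • v + (c - d) • p.projection q h v := by
  obtain ⟨x, hx, y, hy, rfl⟩ := Submodule.mem_sup.1 (h.sup_eq_top ▸ Submodule.mem_top (x := v))
  rw [map_add, hc x hx, hd y hy, map_add, Submodule.projection_apply_of_mem_left h hx,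
    Submodule.projection_apply_of_mem_right h hy]
  module

variable [Algebra K A] [IsScalarTower K A V]

theorem HasScalarEnd.of_isCompl (h : IsCompl p q)
    (hp : ∀ f : Module.End A V, ∃ c : K, ∀ v ∈ p, f v = c • v) : HasScalarEnd K A p := by
  intro f
  obtain ⟨c, hc⟩ := hp (p.subtype ∘ₗ f ∘ₗ p.projectionOnto q h)
  exact ⟨c, fun v => Subtype.ext (by simpa using hc v v.2)⟩

theorem hom_eq_zero_of_isCompl (h : IsCompl p q)
    (hp : ∀ f : Module.End A V, ∃ c : K, ∀ v ∈ p, f v = c • v) (f : p →ₗ[A] q) : f = 0 := by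
  obtain ⟨c, hc⟩ := hp (q.subtype ∘ₗ f ∘ₗ p.projectionOnto q h)
  refine LinearMap.ext fun v => Subtype.ext ?_
  have hfv : (f v : V) = c • (v : V) := by simpa using hc v v.2
  exact Submodule.disjoint_def.1 h.disjoint _ (hfv ▸ p.smul_of_tower_mem c v.2) (f v).2

end Summand

section Representations

variable {K : Type} [Field K] {A : Type} [Ring A] [Algebra K A] {sA : SuperAlg K A}
variable {V : Type} [AddCommGroup V] [Module K V] [Module A V] [IsScalarTower K A V]

theorem SuperMod.matrixRep_σ (sV : SuperMod sA V) {m N : ℕ} (b : Module.Basis (Fin N) K V)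
    (hb : ∀ i, sV.σ (b i) = matEps K m i • b i) (a : A) :
    matrixRep b (sA.σ a) = matrixInvol K m (matrixRep b a) := by
  have repr_σ (v : V) (i : Fin N) : b.repr (sV.σ v) i = matEps K m i * b.repr v i := by
    conv_lhs => rw [← b.sum_repr v]
    simp only [map_sum, map_smul, hb, Module.Basis.repr_self, Finsupp.coe_finsetSum,
      Finset.sum_apply, Finsupp.smul_apply, Finsupp.single_apply]
    simp [mul_comm]
  have σ_smul (j : Fin N) : sA.σ a • b j = matEps K m j • sV.σ (a • b j) := by
    rw [sV.compat, hb, smul_comm (sA.σ a), smul_smul, matEps_mul_self, one_smul]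
  ext i j
  rw [matrixInvol_apply, matrixRep_apply, matrixRep_apply, σ_smul, map_smul, Finsupp.smul_apply,
    repr_σ, smul_eq_mul]
  ring

theorem SuperMod.exists_matrix_rep [NeZero (2 : K)] [IsSemisimpleRing A] [Nontrivial V]
    (sV : SuperMod sA V) (hV : HasScalarEnd K A V) :
    ∃ m n : ℕ, 0 < m + n ∧ ∃ ρ : A →ₐ[K] Matrix (Fin (m + n)) (Fin (m + n)) K,
      Function.Surjective ρ ∧ RingHom.ker ρ = Module.annihilator A V ∧
      ∀ a, ρ (sA.σ a) = matrixInvol K m (ρ a) := by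
  have := hV.finite
  obtain ⟨m, n, b, hb⟩ := exists_basis_map_eq_matEps_smul (σ := sV.σ.toLinearMap) sV.invol
  refine ⟨m, n, Fin.pos_iff_nonempty.2 b.index_nonempty, matrixRep b, hV.matrixRep_surjective b,
    ?_, sV.matrixRep_σ b hb⟩
  ext a
  rw [RingHom.mem_ker, matrixRep_eq_zero_iff, Module.mem_annihilator]

theorem SuperSplit.exists_forall_mem_eq_smul (hsplit : SuperSplit sA) {sV : SuperMod sA V}
    (hV : IrreducibleSuperMod sA sV) (hV_simple : ¬ IsSimpleModule A V) {p q : Submodule A V}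
    (h : IsCompl p q) (hp : p ≠ ⊥) (hq : q ≠ ⊥) (f : Module.End A V) :
    ∃ c : K, ∀ v ∈ p, f v = c • v := by
  obtain ⟨g, -, hg⟩ := (hsplit V sV hV).2 hV_simple
  obtain ⟨c, d, hf⟩ := exists_eq_smul_add_smul_of_ne_smul hg (projection_ne_smul K h hp hq) f
  refine ⟨c + d, fun v hv => ?_⟩
  rw [hf, Submodule.projection_apply_of_mem_left h hv, add_smul]

theorem SuperMod.exists_smul_eq_of_hom_eq_zero [IsSemisimpleRing A] (sV : SuperMod sA V)
    {W : Submodule A V} (hW : ∀ f : W →ₗ[A] sV.twist W, f = 0)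
    (hW' : ∀ f : sV.twist W →ₗ[A] W, f = 0) (a₁ a₂ : A) :
    ∃ a : A, (∀ w : W, a • w = a₁ • w) ∧ ∀ w : W, sA.σ a • w = a₂ • w := by
  obtain ⟨a, ha⟩ := exists_forall_smul_eq_of_pairwise_hom_eq_zero (A := A)
    (M := fun i : Bool => (cond i W (sV.twist W) : Submodule A V))
    (by rintro (_ | _) (_ | _) hij; exacts [absurd rfl hij, hW', hW, absurd rfl hij])
    (fun i => cond i a₁ (sA.σ a₂))
  refine ⟨a, ha true, fun w => Subtype.ext ?_⟩
  have haσ : a • sV.σ w = sA.σ a₂ • sV.σ w :=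
    congrArg Subtype.val (ha false ⟨sV.σ w, sV.σ_mem_twist w.2⟩)
  apply sV.σ.injective
  simpa only [Submodule.coe_smul, sV.compat, sA.invol] using haσ

/-- The representation of a superalgebra in `Q_t(K)` afforded by a module with a chosen basis:
`a` acts on the two components as `a` and as `sA.σ a`. -/
noncomputable def queerRep {ι : Type*} [Fintype ι] [DecidableEq ι] (sA : SuperAlg K A)
    (b : Module.Basis ι K V) : A →ₐ[K] Matrix ι ι K × Matrix ι ι K :=
  (matrixRep b).prod ((matrixRep b).comp (sA.σ : A →ₐ[K] A))

section QueerRep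

variable {ι : Type*} [Fintype ι] [DecidableEq ι] (b : Module.Basis ι K V)

theorem queerRep_apply (a : A) : queerRep sA b a = (matrixRep b a, matrixRep b (sA.σ a)) := rfl

theorem queerRep_σ (a : A) : queerRep sA b (sA.σ a) = (queerRep sA b a).swap := by
  rw [queerRep_apply, queerRep_apply, sA.invol, Prod.swap_prod_mk]

theorem queerRep_surjective [IsSemisimpleRing A] {sV : SuperMod sA V} {W : Submodule A V}
    (hW_end : HasScalarEnd K A W) (hW : ∀ f : W →ₗ[A] sV.twist W, f = 0)
    (hW' : ∀ f : sV.twist W →ₗ[A] W, f = 0) (b : Module.Basis ι K W) :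
    Function.Surjective (queerRep sA b) := by
  rintro ⟨X, Y⟩
  obtain ⟨a₁, rfl⟩ := hW_end.matrixRep_surjective b X
  obtain ⟨a₂, rfl⟩ := hW_end.matrixRep_surjective b Y
  obtain ⟨a, ha₁, ha₂⟩ := sV.exists_smul_eq_of_hom_eq_zero hW hW' a₁ a₂
  refine ⟨a, ?_⟩
  rw [queerRep_apply, (matrixRep_eq_iff b).2 ha₁, (matrixRep_eq_iff b).2 ha₂]

theorem IrreducibleSuperMod.ker_queerRep {sV : SuperMod sA V} (hV : IrreducibleSuperMod sA sV)
    {W : Submodule A V} (hW : W ≠ ⊥) (b : Module.Basis ι K W) :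
    RingHom.ker (queerRep sA b) = Module.annihilator A V := by
  ext a
  rw [RingHom.mem_ker, queerRep_apply, Prod.mk_eq_zero, matrixRep_eq_zero_iff,
    matrixRep_eq_zero_iff]
  constructor
  · rintro ⟨ha, hσa⟩
    exact hV.mem_annihilator_of_forall_mem hW
      (fun v hv => congrArg Subtype.val (ha ⟨v, hv⟩))
      (fun v hv => congrArg Subtype.val (hσa ⟨v, hv⟩))
  · intro ha
    exact ⟨fun w => Subtype.ext (Module.mem_annihilator.1 ha w),
      fun w => Subtype.ext (Module.mem_annihilator.1 (sV.σ_mem_annihilator ha) w)⟩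

end QueerRep

theorem SuperSplit.exists_queer_rep [IsSemisimpleRing A] (hsplit : SuperSplit sA)
    {sV : SuperMod sA V} (hV : IrreducibleSuperMod sA sV) (hV_simple : ¬ IsSimpleModule A V) :
    ∃ t : ℕ, 0 < t ∧
      ∃ τ : A →ₐ[K] Matrix (Fin t) (Fin t) K × Matrix (Fin t) (Fin t) K,
        Function.Surjective τ ∧ RingHom.ker τ = Module.annihilator A V ∧
        ∀ a, τ (sA.σ a) = (τ a).swap := by
  obtain ⟨W, hW, hc⟩ := hV.exists_isSimpleModule_isCompl_twist hV_simple
  have hW_bot : W ≠ ⊥ := (isSimpleModule_iff_isAtom.1 hW).1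
  have htwist_bot : sV.twist W ≠ ⊥ :=
    (isSimpleModule_iff_isAtom.1 (sV.isSimpleModule_twist hW)).1
  have smul_on_W := hsplit.exists_forall_mem_eq_smul hV hV_simple hc hW_bot htwist_bot
  have smul_on_twist := hsplit.exists_forall_mem_eq_smul hV hV_simple hc.symm htwist_bot hW_bot
  have hW_end : HasScalarEnd K A W := .of_isCompl hc smul_on_W
  have := hW_end.finite
  have := IsSimpleModule.nontrivial A W
  let b := Module.finBasis K W
  exact ⟨_, Fin.pos_iff_nonempty.2 b.index_nonempty, queerRep sA b,
    queerRep_surjective hW_end (hom_eq_zero_of_isCompl hc smul_on_W)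
      (hom_eq_zero_of_isCompl hc.symm smul_on_twist) b,
    hV.ker_queerRep hW_bot b, queerRep_σ b⟩

end Representations

section ChineseRemainder

variable {K A : Type*} [Field K] [Ring A] [Algebra K A] [IsSemisimpleRing A]

theorem bijective_prod_pi_of_ker_eq_annihilator {ι κ : Type*} [Finite ι] [Finite κ]
    {M : ι ⊕ κ → Type*} [∀ s, AddCommGroup (M s)] [∀ s, Module A (M s)]
    (hM : Pairwise fun s s' => ∀ f : M s →ₗ[A] M s', f = 0)
    (hM_faithful : ⨅ s, Module.annihilator A (M s) = ⊥)
    {B : ι → Type*} [∀ i, Ring (B i)] [∀ i, Algebra K (B i)] {ρ : ∀ i, A →ₐ[K] B i}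
    (hρ : ∀ i, Function.Surjective (ρ i))
    (ker_ρ : ∀ i, RingHom.ker (ρ i) = Module.annihilator A (M (.inl i)))
    {C : κ → Type*} [∀ j, Ring (C j)] [∀ j, Algebra K (C j)] {τ : ∀ j, A →ₐ[K] C j}
    (hτ : ∀ j, Function.Surjective (τ j))
    (ker_τ : ∀ j, RingHom.ker (τ j) = Module.annihilator A (M (.inr j))) :
    Function.Bijective ((AlgHom.pi ρ).prod (AlgHom.pi τ)) := by
  constructor
  · refine (injective_iff_map_eq_zero _).2 fun a ha => ?_
    rw [← Submodule.mem_bot A, ← hM_faithful, Submodule.mem_iInf]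
    rintro (i | j)
    · exact ker_ρ i ▸ congrFun (congrArg Prod.fst ha) i
    · exact ker_τ j ▸ congrFun (congrArg Prod.snd ha) j
  · rintro ⟨x, y⟩
    choose a ha using fun i => hρ i (x i)
    choose b hb using fun j => hτ j (y j)
    obtain ⟨c, hc⟩ := exists_forall_smul_eq_of_pairwise_hom_eq_zero hM (Sum.elim a b)
    have sub_mem (s : ι ⊕ κ) : c - Sum.elim a b s ∈ Module.annihilator A (M s) :=
      Module.mem_annihilator.2 fun v => by rw [sub_smul, hc, sub_self]
    refine ⟨c, Prod.ext (funext fun i => ?_) (funext fun j => ?_)⟩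
    · exact (RingHom.sub_mem_ker_iff (ρ i)).1 (ker_ρ i ▸ sub_mem (.inl i)) |>.trans (ha i)
    · exact (RingHom.sub_mem_ker_iff (τ j)).1 (ker_τ j ▸ sub_mem (.inr j)) |>.trans (hb j)

end ChineseRemainder

theorem exists_fin_sum_fin_equiv {ι : Type*} [Finite ι] (P : ι → Prop) :
    ∃ (k₁ k₂ : ℕ) (e : Fin k₁ ⊕ Fin k₂ ≃ ι), (∀ i, P (e (.inl i))) ∧ ∀ j, ¬ P (e (.inr j)) := by
  classical
  let e₁ := Finite.equivFin {i // P i}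
  let e₂ := Finite.equivFin {i // ¬ P i}
  exact ⟨_, _, (e₁.symm.sumCongr e₂.symm).trans (Equiv.sumCompl P),
    fun i => (e₁.symm i).2, fun j => (e₂.symm j).2⟩

section Family

variable {K : Type} [Field K] {A : Type} [Ring A] [Algebra K A]

/-- An irreducible supermodule, bundled so that such modules can be indexed by a family. -/
structure SuperIrrep (sA : SuperAlg K A) where
  carrier : Type
  [addCommGroup : AddCommGroup carrier]
  [moduleBase : Module K carrier]
  [module : Module A carrier]
  [isScalarTower : IsScalarTower K A carrier]
  superMod : SuperMod sA carrier
  irreducible : IrreducibleSuperMod sA superMod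

attribute [instance] SuperIrrep.addCommGroup SuperIrrep.moduleBase SuperIrrep.module
  SuperIrrep.isScalarTower

variable {sA : SuperAlg K A} [IsSemisimpleRing A]

variable (sA) in
theorem SuperIrrep.iInf_annihilator_eq_bot :
    ⨅ V : SuperIrrep sA, Module.annihilator A V.carrier = ⊥ := by
  rw [← le_bot_iff, ← IsSemisimpleRing.jacobson_eq_bot A, Ring.jacobson_eq_sInf_isMaximal]
  refine le_sInf fun M hM a ha => ?_
  have : IsSimpleModule A (A ⧸ M) := isSimpleModule_iff_isCoatom.2 (Ideal.isMaximal_def.1 hM)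
  obtain ⟨V, _, _, _, _, sV, hV, ι, r, hr⟩ :=
    SuperMod.exists_irreducible_retract (W := A ⧸ M) sA
  have ha_quot : a ∈ Module.annihilator A (A ⧸ M) :=
    r.annihilator_le_of_surjective (Function.LeftInverse.surjective hr)
      ((Submodule.mem_iInf _).1 ha ⟨V, sV, hV⟩)
  simpa [← Submodule.Quotient.mk_smul, Submodule.Quotient.mk_eq_zero] using
    Module.mem_annihilator.1 ha_quot (Submodule.Quotient.mk 1)

variable (sA) in
theorem SuperIrrep.exists_faithful_family :
    ∃ (ι : Type) (_ : Finite ι) (V : ι → SuperIrrep sA),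
      (Pairwise fun i j => ∀ f : (V i).carrier →ₗ[A] (V j).carrier, f = 0) ∧
      ⨅ i, Module.annihilator A (V i).carrier = ⊥ := by
  classical
  obtain ⟨s, hs⟩ := Finset.exists_inf_le fun V : SuperIrrep sA => Module.annihilator A V.carrier
  let ideals := s.image fun V => Module.annihilator A V.carrier
  have mem_ideals (I : ideals) : ∃ V : SuperIrrep sA, Module.annihilator A V.carrier = I.1 := by
    obtain ⟨V, -, hV⟩ := Finset.mem_image.1 I.2
    exact ⟨V, hV⟩
  choose V hV using mem_ideals
  refine ⟨ideals, inferInstance, V, fun I J hIJ f => by_contra fun hf => hIJ ?_, ?_⟩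
  · refine Subtype.ext ?_
    rw [← hV I, ← hV J, (V I).irreducible.annihilator_eq_of_ne_zero (V J).irreducible hf]
  · rw [← le_bot_iff, ← SuperIrrep.iInf_annihilator_eq_bot sA]
    refine le_iInf fun W => le_trans (Finset.le_inf fun U hU => ?_) (hs W)
    exact (iInf_le _ ⟨_, Finset.mem_image_of_mem _ hU⟩).trans_eq (hV _)

end Family

section Forward

variable {K : Type} [Field K] {A : Type} [Ring A] [Algebra K A] {sA : SuperAlg K A}

theorem SuperSplit.exists_algEquiv_msqAlg [NeZero (2 : K)] [IsSemisimpleRing A]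
    (hsplit : SuperSplit sA) :
    ∃ (k₁ k₂ : ℕ) (m n : Fin k₁ → ℕ) (t : Fin k₂ → ℕ),
      (∀ i, 0 < m i + n i) ∧ (∀ j, 0 < t j) ∧
      ∃ φ : A ≃ₐ[K] MsqAlg K k₁ k₂ m n t,
        ∀ a : A, φ (sA.σ a) = msqInvol K k₁ k₂ m n t (φ a) := by
  obtain ⟨ι, _, V, hom_eq_zero, faithful⟩ := SuperIrrep.exists_faithful_family sA
  obtain ⟨k₁, k₂, e, simple, not_simple⟩ :=
    exists_fin_sum_fin_equiv fun i => IsSimpleModule A (V i).carrier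
  have := fun i => (V i).irreducible.nontrivial
  choose m n hmn ρ hρ ker_ρ ρ_σ using fun i => (V (e (.inl i))).superMod.exists_matrix_rep
    ((hsplit _ _ (V _).irreducible).1 (simple i))
  choose t ht τ hτ ker_τ τ_σ using fun j =>
    hsplit.exists_queer_rep (V (e (.inr j))).irreducible (not_simple j)
  have bijective := bijective_prod_pi_of_ker_eq_annihilator
    (hom_eq_zero.comp_of_injective e.injective)
    ((e.iInf_comp (g := fun i => Module.annihilator A (V i).carrier)).trans faithful)
    hρ ker_ρ hτ ker_τ
  exact ⟨k₁, k₂, m, n, t, hmn, ht, .ofBijective _ bijective,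
    fun a => Prod.ext (funext fun i => ρ_σ i a) (funext fun j => τ_σ j a)⟩

end Forward

section SplitIdempotent

/-- An idempotent `p` of a `K`-algebra with sign involution `τ` whose corner `p A p` is spanned by
`p`, and which is either even or has no nonzero homomorphism from `A p` to its parity twist
`A (τ p)`. The nonzero ones are the even primitive idempotents in `M_{m|n}(K)`, and all primitive
idempotents in `Q_t(K)`. -/
structure IsSplitIdempotent (K : Type*) [Field K] {A : Type*} [Ring A] [Algebra K A]
    (τ : A → A) (p : A) : Prop where
  mul_self : p * p = p
  corner (x : A) : ∃ c : K, p * x * p = c • p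
  parity : τ p = p ∨ ∀ x, p * x * τ p = 0

/-- The sums of split idempotents. A superalgebra in which `1` is such a sum is split. -/
def splitSpan (K : Type*) [Field K] {A : Type*} [Ring A] [Algebra K A] (τ : A → A) :
    AddSubmonoid A :=
  AddSubmonoid.closure {p | IsSplitIdempotent K τ p}

section Transport

variable {K A B : Type*} [Field K] [Ring A] [Algebra K A] [Ring B] [Algebra K B]
  {τ : A → A} {τ' : B → B}

/- `j` identifies `A` with a corner of `B`, and `r` is the compression to that corner. -/
theorem IsSplitIdempotent.map {p : A} (hp : IsSplitIdempotent K τ p) (j : A →ₗ[K] B) (r : B → A)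
    (r_one : r 1 = 1) (j_mul_mul : ∀ a x b, j a * x * j b = j (a * r x * b))
    (hj : ∀ a, τ' (j a) = j (τ a)) : IsSplitIdempotent K τ' (j p) where
  mul_self := by
    have h := j_mul_mul p 1 p
    rwa [mul_one, r_one, mul_one, hp.mul_self] at h
  corner x := by
    obtain ⟨c, hc⟩ := hp.corner (r x)
    exact ⟨c, by rw [j_mul_mul, hc, map_smul]⟩
  parity := hp.parity.imp (fun h => by rw [hj, h]) fun h x => by
    rw [hj, j_mul_mul, h, map_zero]

theorem map_mem_splitSpan (j : A →ₗ[K] B) (r : B → A)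
    (r_one : r 1 = 1) (j_mul_mul : ∀ a x b, j a * x * j b = j (a * r x * b))
    (hj : ∀ a, τ' (j a) = j (τ a)) {a : A} (ha : a ∈ splitSpan K τ) : j a ∈ splitSpan K τ' := by
  have : splitSpan K τ ≤ (splitSpan K τ').comap j.toAddMonoidHom :=
    AddSubmonoid.closure_le.2 fun p hp =>
      AddSubmonoid.subset_closure (hp.map j r r_one j_mul_mul hj)
  exact this ha

theorem one_mem_splitSpan_of_algEquiv (φ : A ≃ₐ[K] B) (hφ : ∀ a, φ (τ a) = τ' (φ a))
    (h : 1 ∈ splitSpan K τ') : 1 ∈ splitSpan K τ := by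
  rw [← map_one φ.symm]
  refine map_mem_splitSpan φ.symm.toLinearMap φ (map_one φ) (by simp) (fun b => ?_) h
  exact φ.injective (by simp [hφ])

theorem one_mem_splitSpan_prodMap (hτ : τ 0 = 0) (hτ' : τ' 0 = 0) (h : 1 ∈ splitSpan K τ)
    (h' : 1 ∈ splitSpan K τ') : 1 ∈ splitSpan K (Prod.map τ τ') := by
  have one_eq : (1 : A × B) = LinearMap.inl K A B 1 + LinearMap.inr K A B 1 :=
    Prod.ext (by simp) (by simp)
  rw [one_eq]
  exact add_mem
    (map_mem_splitSpan (.inl K A B) Prod.fst rfl (by simp) (by simp [hτ']) h)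
    (map_mem_splitSpan (.inr K A B) Prod.snd rfl (by simp) (by simp [hτ]) h')

theorem one_mem_splitSpan_piMap {ι : Type*} [Finite ι] {C : ι → Type*} [∀ i, Ring (C i)]
    [∀ i, Algebra K (C i)] {τ : ∀ i, C i → C i} (hτ : ∀ i, τ i 0 = 0)
    (h : ∀ i, 1 ∈ splitSpan K (τ i)) : 1 ∈ splitSpan K (Pi.map τ) := by
  classical
  have := Fintype.ofFinite ι
  rw [← Finset.univ_sum_single (1 : ∀ i, C i)]
  refine sum_mem fun i _ => map_mem_splitSpan (.single K C i) (fun x => x i) rfl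
    (fun a x b => ?_) (fun a => ?_) (h i)
  · simp only [LinearMap.single_apply, ← Pi.single_mul_left, ← Pi.single_mul_right,
      Pi.single_eq_same]
  · exact funext (Pi.apply_single τ hτ i a)

end Transport

section Factors

variable (K : Type) [Field K]

theorem isSplitIdempotent_single (m : ℕ) {N : ℕ} (k : Fin N) :
    IsSplitIdempotent K (matrixInvol K m) (Matrix.single k k 1) where
  mul_self := by simp
  corner x := ⟨x k k, by simp [Matrix.single_mul_mul_single]⟩
  parity := .inl <| by
    ext i j
    rw [matrixInvol_apply]
    by_cases h : k = i ∧ k = j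
    · obtain ⟨rfl, rfl⟩ := h
      simp [matEps_mul_self]
    · simp [h]

theorem one_mem_splitSpan_matrixInvol (m N : ℕ) :
    1 ∈ splitSpan K (matrixInvol K m (N := N)) := by
  rw [← Matrix.sum_single_one]
  exact sum_mem fun k _ => AddSubmonoid.subset_closure (isSplitIdempotent_single K m k)

theorem isSplitIdempotent_swap_left {t : ℕ} (k : Fin t) :
    IsSplitIdempotent K (Prod.swap : _ → Matrix (Fin t) (Fin t) K × Matrix (Fin t) (Fin t) K)
      (.single k k 1, 0) where
  mul_self := by simp
  corner x := ⟨x.1 k k, by simp [Prod.ext_iff, Matrix.single_mul_mul_single]⟩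
  parity := .inr fun x => by simp [Prod.ext_iff]

theorem isSplitIdempotent_swap_right {t : ℕ} (k : Fin t) :
    IsSplitIdempotent K (Prod.swap : _ → Matrix (Fin t) (Fin t) K × Matrix (Fin t) (Fin t) K)
      (0, .single k k 1) where
  mul_self := by simp
  corner x := ⟨x.2 k k, by simp [Prod.ext_iff, Matrix.single_mul_mul_single]⟩
  parity := .inr fun x => by simp [Prod.ext_iff]

theorem one_mem_splitSpan_swap (t : ℕ) :
    1 ∈ splitSpan K
      (Prod.swap : _ → Matrix (Fin t) (Fin t) K × Matrix (Fin t) (Fin t) K) := by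
  have one_eq : (1 : Matrix (Fin t) (Fin t) K × Matrix (Fin t) (Fin t) K) =
      ∑ k, (.single k k 1, 0) + ∑ k, (0, .single k k 1) := by
    simp [Prod.ext_iff, Prod.fst_sum, Prod.snd_sum, Matrix.sum_single_one]
  rw [one_eq]
  exact add_mem
    (sum_mem fun k _ => AddSubmonoid.subset_closure (isSplitIdempotent_swap_left K k))
    (sum_mem fun k _ => AddSubmonoid.subset_closure (isSplitIdempotent_swap_right K k))

theorem one_mem_splitSpan_msqInvol (k₁ k₂ : ℕ) (m n : Fin k₁ → ℕ) (t : Fin k₂ → ℕ) :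
    1 ∈ splitSpan K (msqInvol K k₁ k₂ m n t) := by
  have matrixInvol_zero (i : Fin k₁) :
      matrixInvol K (m i) (0 : Matrix (Fin (m i + n i)) _ K) = 0 := by
    ext
    simp [matrixInvol_apply]
  rw [msqInvol_eq_prodMap]
  exact one_mem_splitSpan_prodMap (funext matrixInvol_zero) rfl
    (one_mem_splitSpan_piMap matrixInvol_zero fun i => one_mem_splitSpan_matrixInvol K (m i) _)
    (one_mem_splitSpan_piMap (fun _ => rfl) fun j => one_mem_splitSpan_swap K (t j))

end Factors

end SplitIdempotent

section Corner

variable {K A V : Type*} [Field K] [Ring A] [Algebra K A] [AddCommGroup V] [Module A V] {τ : A → A}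

theorem exists_isSplitIdempotent_smul_ne_zero (h : 1 ∈ splitSpan K τ) {v : V} (hv : v ≠ 0) :
    ∃ p, IsSplitIdempotent K τ p ∧ p • v ≠ 0 := by
  by_contra! hp
  have le_ker : splitSpan K τ ≤
      AddMonoidHom.mker (LinearMap.toSpanSingleton A V v).toAddMonoidHom :=
    AddSubmonoid.closure_le.2 hp
  exact hv ((one_smul A v).symm.trans (le_ker h))

namespace IsSplitIdempotent

variable [Module K V] [IsScalarTower K A V] {p : A} {w : V}

theorem exists_smul_smul_eq (hp : IsSplitIdempotent K τ p) (hw : p • w = w) (x : A) :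
    ∃ c : K, p • x • w = c • w := by
  obtain ⟨c, hc⟩ := hp.corner x
  exact ⟨c, by rw [← hw, smul_smul, smul_smul, hc, smul_assoc, hw]⟩

theorem exists_forall_mem_span_eq_smul (hp : IsSplitIdempotent K τ p) (hw : p • w = w)
    {q : Submodule A V} (hq : ∀ u ∈ q, p • u = 0) (hwq : Submodule.span A {w} ⊔ q = ⊤)
    (f : Module.End A V) : ∃ c : K, ∀ v ∈ Submodule.span A {w}, f v = c • v := by
  obtain ⟨y, hy, u, hu, hfw⟩ := Submodule.mem_sup.1 (hwq ▸ Submodule.mem_top (x := f w))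
  obtain ⟨x, rfl⟩ := Submodule.mem_span_singleton.1 hy
  obtain ⟨c, hc⟩ := hp.exists_smul_smul_eq hw x
  have f_w : f w = c • w := by
    rw [← hw, map_smul, ← hfw, smul_add, hq u hu, add_zero, hc, hw]
  refine ⟨c, fun v hv => ?_⟩
  obtain ⟨a, rfl⟩ := Submodule.mem_span_singleton.1 hv
  rw [map_smul, f_w, smul_comm]

end IsSplitIdempotent

end Corner

section Criterion

variable {K : Type} [Field K] {A : Type} [Ring A] [Algebra K A]
variable {V : Type} [AddCommGroup V] [Module K V] [Module A V] [IsScalarTower K A V]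
variable {sA : SuperAlg K A} {sV : SuperMod sA V} {p : A}

theorem SuperMod.stable_span_singleton {w : V} (hw : sV.σ w ∈ Submodule.span A {w}) :
    sV.Stable (Submodule.span A {w}) := by
  intro v hv
  obtain ⟨a, rfl⟩ := Submodule.mem_span_singleton.1 hv
  rw [sV.compat]
  exact Submodule.smul_mem _ _ hw

theorem SuperMod.exists_stable_span_singleton (sV : SuperMod sA V) (hp : p * p = p)
    (hσp : sA.σ p = p) {v : V} (hv : p • v ≠ 0) :
    ∃ w : V, w ≠ 0 ∧ p • w = w ∧ sV.Stable (Submodule.span A {w}) := by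
  have smul_self (u : V) : p • p • u = p • u := by rw [smul_smul, hp]
  by_cases hodd : p • v + sV.σ (p • v) = 0
  · refine ⟨p • v, hv, smul_self v, stable_span_singleton ?_⟩
    rw [eq_neg_of_add_eq_zero_right hodd]
    exact neg_mem (Submodule.mem_span_singleton_self _)
  · refine ⟨p • v + sV.σ (p • v), hodd, ?_, stable_span_singleton ?_⟩
    · rw [sV.compat, hσp, smul_add, smul_self, smul_self]
    · rw [map_add, sV.invol, add_comm]
      exact Submodule.mem_span_singleton_self _

/- The vectors `v` with `p A v = 0` form a proper sub-supermodule, so they vanish; hence every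
nonzero submodule meets the line `p V = K w`. -/
theorem IrreducibleSuperMod.isSimpleModule_of_smul_eq (hV : IrreducibleSuperMod sA sV)
    (hp : IsSplitIdempotent K sA.σ p) (hσp : sA.σ p = p) {w : V} (hw_ne : w ≠ 0)
    (hw : p • w = w) (hw_top : Submodule.span A {w} = ⊤) : IsSimpleModule A V := by
  have := hV.nontrivial
  let N : Submodule A V :=
    { carrier := {v | ∀ x : A, p • x • v = 0}
      add_mem' := fun hu hv x => by rw [smul_add, smul_add, hu, hv, add_zero]
      zero_mem' := fun x => by rw [smul_zero, smul_zero]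
      smul_mem' := fun a v hv x => by rw [smul_smul x, hv] }
  have N_stable : sV.Stable N := fun v hv x => by
    rw [sV.smul_σ, sV.smul_σ, hσp, hv, map_zero]
  have N_eq_bot : N = ⊥ := hV.eq_bot N_stable fun hN => hw_ne <| by
    simpa [hw] using (hN ▸ Submodule.mem_top : w ∈ N) 1
  refine (isSimpleModule_iff A V).2 ⟨fun P => or_iff_not_imp_left.2 fun hP => ?_⟩
  obtain ⟨u, hu, hu_ne⟩ := P.exists_mem_ne_zero_of_ne_bot hP
  obtain ⟨x, hx⟩ : ∃ x : A, p • x • u ≠ 0 := by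
    by_contra! h
    exact hu_ne ((Submodule.mem_bot A).1 (N_eq_bot ▸ h : u ∈ (⊥ : Submodule A V)))
  obtain ⟨y, hy⟩ := Submodule.mem_span_singleton.1 (hw_top ▸ Submodule.mem_top (x := x • u))
  obtain ⟨c, hc⟩ := hp.exists_smul_smul_eq hw y
  rw [← hy, hc] at hx
  have hw_mem : w ∈ P := by
    rw [← inv_smul_smul₀ (smul_ne_zero_iff.1 hx).1 w, ← hc, hy]
    exact P.smul_of_tower_mem _ (P.smul_mem _ (P.smul_mem _ hu))
  exact top_le_iff.1 (hw_top ▸ (Submodule.span_singleton_le_iff_mem _ _).2 hw_mem)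

theorem IrreducibleSuperMod.isSimpleModule_and_hasScalarEnd (hV : IrreducibleSuperMod sA sV)
    (hp : IsSplitIdempotent K sA.σ p) (hσp : sA.σ p = p) {v : V} (hv : p • v ≠ 0) :
    IsSimpleModule A V ∧ HasScalarEnd K A V := by
  obtain ⟨w, hw_ne, hw, hw_stable⟩ := sV.exists_stable_span_singleton hp.mul_self hσp hv
  have hw_top : Submodule.span A {w} = ⊤ :=
    hV.eq_top hw_stable (Submodule.span_singleton_eq_bot.not.2 hw_ne)
  refine ⟨hV.isSimpleModule_of_smul_eq hp hσp hw_ne hw hw_top, fun f => ?_⟩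
  obtain ⟨c, hc⟩ := hp.exists_forall_mem_span_eq_smul hw (q := ⊥)
    (fun u hu => by rw [(Submodule.mem_bot A).1 hu, smul_zero]) (by rw [hw_top, top_sup_eq]) f
  exact ⟨c, fun v => hc v (hw_top ▸ Submodule.mem_top)⟩

theorem SuperMod.smul_eq_zero_of_mem_twist_span (sV : SuperMod sA V)
    (hσp : ∀ x, p * x * sA.σ p = 0) {v u : V}
    (hu : u ∈ sV.twist (Submodule.span A {p • v})) : p • u = 0 := by
  obtain ⟨x, hx⟩ := Submodule.mem_span_singleton.1 hu
  rw [← sV.invol u, ← hx, sV.compat, sV.compat, smul_smul, smul_smul, hσp, zero_smul]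

/- Conjugation by the sign involution turns scalarity on `W` into scalarity on its twist. -/
theorem SuperMod.exists_eq_smul_add_smul_projection (sV : SuperMod sA V) {W : Submodule A V}
    (h : IsCompl W (sV.twist W))
    (hW : ∀ f : Module.End A V, ∃ c : K, ∀ v ∈ W, f v = c • v) (f : Module.End A V) :
    ∃ c d : K, ∀ v, f v = c • v + d • W.projection (sV.twist W) h v := by
  obtain ⟨c, hc⟩ := hW f
  obtain ⟨d, hd⟩ := hW (sV.conj f)
  have hd_twist (v : V) (hv : v ∈ sV.twist W) : f v = d • v := by
    apply sV.σ.injective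
    rw [map_smul, ← hd _ hv, conj_apply, sV.invol]
  exact ⟨d, c - d, eq_smul_add_smul_projection h hc hd_twist⟩

theorem IrreducibleSuperMod.exists_isCompl_twist_of_smul_ne_zero
    (hV : IrreducibleSuperMod sA sV) (hp : IsSplitIdempotent K sA.σ p)
    (hσp : ∀ x, p * x * sA.σ p = 0) {v : V} (hv : p • v ≠ 0) :
    ∃ W : Submodule A V, W ≠ ⊥ ∧ W ≠ ⊤ ∧ IsCompl W (sV.twist W) ∧
      ∀ f : Module.End A V, ∃ c : K, ∀ v ∈ W, f v = c • v := by
  have p_smul_twist {u : V} (hu : u ∈ sV.twist (Submodule.span A {p • v})) : p • u = 0 :=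
    sV.smul_eq_zero_of_mem_twist_span hσp hu
  have hW_bot : Submodule.span A {p • v} ≠ ⊥ := Submodule.span_singleton_eq_bot.not.2 hv
  have hW_top : Submodule.span A {p • v} ≠ ⊤ := by
    refine fun htop => hv (p_smul_twist ?_)
    rw [sV.mem_twist, htop]
    exact Submodule.mem_top
  have hc := hV.isCompl_twist hW_bot hW_top
  exact ⟨_, hW_bot, hW_top, hc, hp.exists_forall_mem_span_eq_smul
    (by rw [smul_smul, hp.mul_self]) (fun u hu => p_smul_twist hu) hc.sup_eq_top⟩

theorem superSplit_of_one_mem_splitSpan (h : 1 ∈ splitSpan K sA.σ) : SuperSplit sA := by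
  intro V _ _ _ _ sV hV
  obtain ⟨v, hv_ne⟩ := hV.1
  obtain ⟨p, hp, hv⟩ := exists_isSplitIdempotent_smul_ne_zero h hv_ne
  obtain hσp | hσp := hp.parity
  · obtain ⟨hV_simple, hV_end⟩ := hV.isSimpleModule_and_hasScalarEnd hp hσp hv
    exact ⟨fun _ => hV_end, fun h => absurd hV_simple h⟩
  · obtain ⟨W, hW_bot, hW_top, hc, hW⟩ := hV.exists_isCompl_twist_of_smul_ne_zero hp hσp hv
    have htwist_bot : sV.twist W ≠ ⊥ := fun h => hW_top (by simpa [h] using hc.sup_eq_top)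
    refine ⟨fun _ => ?_, fun _ => ⟨W.projection _ hc, projection_ne_smul K hc hW_bot htwist_bot,
      sV.exists_eq_smul_add_smul_projection hc hW⟩⟩
    exact absurd (eq_bot_or_eq_top W) (not_or.2 ⟨hW_bot, hW_top⟩)

end Criterion

instance MsqAlg.isSemisimpleRing (K : Type) [Field K] (k₁ k₂ : ℕ) (m n : Fin k₁ → ℕ)
    (t : Fin k₂ → ℕ) : IsSemisimpleRing (MsqAlg K k₁ k₂ m n t) :=
  inferInstanceAs (IsSemisimpleRing (_ × _))

theorem superSplit_semisimple_iff_matrix_queer_general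
    (K : Type) [Field K] [NeZero (2 : K)] (A : Type) [Ring A] [Algebra K A] (sA : SuperAlg K A) :
    ((SuperSplit sA ∧ SuperSemisimple sA) ↔
      ∃ (k₁ k₂ : ℕ) (m n : Fin k₁ → ℕ) (t : Fin k₂ → ℕ),
        (∀ i, 0 < m i + n i) ∧ (∀ j, 0 < t j) ∧
        ∃ φ : A ≃ₐ[K] MsqAlg K k₁ k₂ m n t,
          ∀ a : A, φ (sA.σ a) = msqInvol K k₁ k₂ m n t (φ a)) ∧
    ∀ (W : Type) [AddCommGroup W] [Module K W] [Module A W] [IsScalarTower K A W],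
      IsSimpleModule A W →
      ∃ (V : Type) (_ : AddCommGroup V) (_ : Module K V) (_ : Module A V)
        (_ : IsScalarTower K A V) (sV : SuperMod sA V),
        IrreducibleSuperMod sA sV ∧
        ∃ (ι : W →ₗ[A] V) (r : V →ₗ[A] W), ∀ w, r (ι w) = w := by
  rw [superSemisimple_iff_isSemisimpleRing]
  refine ⟨⟨fun ⟨hsplit, _⟩ => hsplit.exists_algEquiv_msqAlg, ?_⟩,
    fun W _ _ _ _ _ => SuperMod.exists_irreducible_retract sA⟩
  rintro ⟨k₁, k₂, m, n, t, -, -, φ, hφ⟩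
  exact ⟨superSplit_of_one_mem_splitSpan <|
      one_mem_splitSpan_of_algEquiv φ hφ (one_mem_splitSpan_msqInvol K k₁ k₂ m n t),
    φ.symm.toRingEquiv.isSemisimpleRing⟩

/-- A `K`-superalgebra `A` over a field of characteristic `0` is split
semisimple if and only if it is isomorphic as a superalgebra to a finite direct sum of
superalgebras of the form `M_{m|n}(K)` (with `m + n > 0`) or `Q_t(K)` (with `t > 0`).
Moreover, in this case every irreducible `|A|`-module is a direct summand of an irreducible
`A`-supermodule considered as an `|A|`-module. -/
theorem superSplit_semisimple_iff_matrix_queer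
    (K : Type) [Field K] [CharZero K]
    (A : Type) [Ring A] [Algebra K A] [FiniteDimensional K A] (sA : SuperAlg K A) :
    ((SuperSplit sA ∧ SuperSemisimple sA) ↔
      ∃ (k₁ k₂ : ℕ) (m n : Fin k₁ → ℕ) (t : Fin k₂ → ℕ),
        (∀ i, 0 < m i + n i) ∧ (∀ j, 0 < t j) ∧
        ∃ φ : A ≃ₐ[K] MsqAlg K k₁ k₂ m n t,
          ∀ a : A, φ (sA.σ a) = msqInvol K k₁ k₂ m n t (φ a)) ∧
    (SuperSplit sA ∧ SuperSemisimple sA →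
      ∀ (W : Type) [AddCommGroup W] [Module K W] [Module A W] [IsScalarTower K A W],
        IsSimpleModule A W →
        ∃ (V : Type) (_ : AddCommGroup V) (_ : Module K V) (_ : Module A V)
          (_ : IsScalarTower K A V) (sV : SuperMod sA V),
          IrreducibleSuperMod sA sV ∧
          ∃ (ι : W →ₗ[A] V) (r : V →ₗ[A] W), ∀ w, r (ι w) = w) := by
  obtain ⟨iff_matrix_queer, retract⟩ := superSplit_semisimple_iff_matrix_queer_general K A sA
  exact ⟨iff_matrix_queer, fun _ => retract⟩
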